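/- Suppose H_A = C^d, Alice performs the partial Bell state measurement with two outcomes M_0 = Φ+^{VA} and M_1 = 1_{VA} − Φ+^{VA}, and the input set {ω_x} is tomographically complete. Then the random teleportation robustness of the resulting assemblage equals ε_r(ρ^{AB})/d², where ε_r is the random entanglement robustness of the shared state. -/

import Mathlib

open Matrix ComplexOrder
open scoped Kronecker

namespace Tele

noncomputable def ptrace₁ {V B : Type*} [Fintype V]
    (M : Matrix (V × B) (V × B) ℂ) : Matrix B B ℂ :=
  Matrix.of fun b b' => ∑ v, M (v, b) (v, b')

noncomputable def ptrace₂ {V B : Type*} [Fintype B]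
    (M : Matrix (V × B) (V × B) ℂ) : Matrix V V ℂ :=
  Matrix.of fun v v' => ∑ b, M (v, b) (v', b)

noncomputable def ptraceMid {V A B : Type*} [Fintype A]
    (M : Matrix (V × A × B) (V × A × B) ℂ) : Matrix (V × B) (V × B) ℂ :=
  Matrix.of fun p q => ∑ a, M (p.1, a, p.2) (q.1, a, q.2)

noncomputable def ptraceVA {V A B : Type*} [Fintype V] [Fintype A]
    (M : Matrix (V × A × B) (V × A × B) ℂ) : Matrix B B ℂ :=
  Matrix.of fun b b' => ∑ v, ∑ a, M (v, a, b) (v, a, b')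

noncomputable def ptraceV₁A {V V₁ A B : Type*} [Fintype V₁] [Fintype A]
    (M : Matrix (V × V₁ × A × B) (V × V₁ × A × B) ℂ) : Matrix (V × B) (V × B) ℂ :=
  Matrix.of fun p q => ∑ v₁, ∑ a, M (p.1, v₁, a, p.2) (q.1, v₁, a, q.2)

def ptranspose₁ {V B : Type*} (M : Matrix (V × B) (V × B) ℂ) : Matrix (V × B) (V × B) ℂ :=
  Matrix.of fun p q => M (q.1, p.2) (p.1, q.2)

def ptranspose₂ {V B : Type*} (M : Matrix (V × B) (V × B) ℂ) : Matrix (V × B) (V × B) ℂ :=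
  Matrix.of fun p q => M (p.1, q.2) (q.1, p.2)

def Separable {V B : Type*} [Fintype V] [Fintype B]
    (M : Matrix (V × B) (V × B) ℂ) : Prop :=
  ∃ (n : ℕ) (τ : Fin n → Matrix V V ℂ) (χ : Fin n → Matrix B B ℂ),
    (∀ i, (τ i).PosSemidef) ∧ (∀ i, (χ i).PosSemidef) ∧ M = ∑ i, τ i ⊗ₖ χ i

def IsState {V : Type*} [Fintype V] (ρ : Matrix V V ℂ) : Prop :=
  ρ.PosSemidef ∧ ρ.trace = 1

noncomputable def maxEnt (d : ℕ) : Matrix (Fin d × Fin d) (Fin d × Fin d) ℂ :=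
  Matrix.of fun p q => if p.1 = p.2 ∧ q.1 = q.2 then (d : ℂ)⁻¹ else 0

noncomputable def chanOp {V A B : Type*} [Fintype V] [Fintype A] [Fintype B]
    [DecidableEq V] [DecidableEq B]
    (M : Matrix (V × A) (V × A) ℂ) (ρ : Matrix (A × B) (A × B) ℂ) :
    Matrix (V × B) (V × B) ℂ :=
  ptraceMid ((Matrix.reindex (Equiv.prodAssoc V A B) (Equiv.prodAssoc V A B)
      (M ⊗ₖ (1 : Matrix B B ℂ))) * ((1 : Matrix V V ℂ) ⊗ₖ ρ))

noncomputable def teleA {V A B : Type*} [Fintype V] [Fintype A] [Fintype B] [DecidableEq B]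
    (M : Matrix (V × A) (V × A) ℂ) (ρ : Matrix (A × B) (A × B) ℂ) (ω : Matrix V V ℂ) :
    Matrix B B ℂ :=
  ptraceVA ((Matrix.reindex (Equiv.prodAssoc V A B) (Equiv.prodAssoc V A B)
      (M ⊗ₖ (1 : Matrix B B ℂ))) * (ω ⊗ₖ ρ))

noncomputable def margOp {V A : Type*} [Fintype V] [Fintype A] [DecidableEq V]
    (M : Matrix (V × A) (V × A) ℂ) (ρA : Matrix A A ℂ) : Matrix V V ℂ :=
  ptrace₂ (M * ((1 : Matrix V V ℂ) ⊗ₖ ρA))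

noncomputable def piOp {A B : Type*} [Fintype A] [Fintype B] [DecidableEq B]
    (χ : Matrix A A ℂ) (ρ : Matrix (A × B) (A × B) ℂ) : Matrix B B ℂ :=
  ptrace₁ ((χ ⊗ₖ (1 : Matrix B B ℂ)) * ρ)

def TomoComplete {V X : Type*} [Fintype V] (ω : X → Matrix V V ℂ) : Prop :=
  ∀ H : Matrix V V ℂ, H.IsHermitian → H ∈ Submodule.span ℝ (Set.range ω)

noncomputable def shiftX (d : ℕ) : Matrix (Fin d) (Fin d) ℂ :=
  Matrix.of fun i j => if (i : ℕ) = ((j : ℕ) + 1) % d then 1 else 0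

noncomputable def clockZ (d : ℕ) : Matrix (Fin d) (Fin d) ℂ :=
  Matrix.of fun i j =>
    if i = j then Complex.exp (2 * (Real.pi : ℂ) * Complex.I * ((i : ℕ) : ℂ) / (d : ℂ)) else 0

noncomputable def HW (d : ℕ) (a : Fin d × Fin d) : Matrix (Fin d) (Fin d) ℂ :=
  shiftX d ^ (a.1 : ℕ) * clockZ d ^ (a.2 : ℕ)

noncomputable def bellPOVM (d : ℕ) (a : Fin d × Fin d) :
    Matrix (Fin d × Fin d) (Fin d × Fin d) ℂ :=
  (HW d a ⊗ₖ (1 : Matrix (Fin d) (Fin d) ℂ)) * maxEnt d *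
    ((HW d a)ᴴ ⊗ₖ (1 : Matrix (Fin d) (Fin d) ℂ))

noncomputable def negativity {A B : Type*} [Fintype A] [Fintype B]
    (ρ : Matrix (A × B) (A × B) ℂ) : ℝ :=
  sInf {t : ℝ | ∃ ρp ρm : Matrix (A × B) (A × B) ℂ,
    ρ = ρp - ρm ∧ (ptranspose₁ ρp).PosSemidef ∧ (ptranspose₁ ρm).PosSemidef ∧
    t = (ρm.trace).re}

noncomputable def epsGen {A B : Type*} [Fintype A] [Fintype B]
    (ρ : Matrix (A × B) (A × B) ℂ) : ℝ :=
  sInf {r : ℝ | 0 ≤ r ∧ ∃ ρs : Matrix (A × B) (A × B) ℂ, IsState ρs ∧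
    Separable ((((1 + r : ℝ) : ℂ))⁻¹ • (ρ + ((r : ℝ) : ℂ) • ρs))}

noncomputable def epsSep {A B : Type*} [Fintype A] [Fintype B]
    (ρ : Matrix (A × B) (A × B) ℂ) : ℝ :=
  sInf {r : ℝ | 0 ≤ r ∧ ∃ ρs : Matrix (A × B) (A × B) ℂ, IsState ρs ∧ Separable ρs ∧
    Separable ((((1 + r : ℝ) : ℂ))⁻¹ • (ρ + ((r : ℝ) : ℂ) • ρs))}

noncomputable def epsR {A B : Type*} [Fintype A] [Fintype B] [DecidableEq A] [DecidableEq B]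
    (ρ : Matrix (A × B) (A × B) ℂ) : ℝ :=
  sInf {r : ℝ | 0 ≤ r ∧
    Separable ((((1 + r : ℝ) : ℂ))⁻¹ •
      (ρ + ((r : ℝ) : ℂ) • ((Fintype.card (A × B) : ℂ)⁻¹ • (1 : Matrix (A × B) (A × B) ℂ))))}

noncomputable def epsBSA {A B : Type*} [Fintype A] [Fintype B]
    (ρ : Matrix (A × B) (A × B) ℂ) : ℝ :=
  sInf {p : ℝ | 0 ≤ p ∧ p ≤ 1 ∧ ∃ ρs σS : Matrix (A × B) (A × B) ℂ,
    IsState ρs ∧ IsState σS ∧ Separable σS ∧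
    ρ = ((p : ℝ) : ℂ) • ρs + (((1 - p : ℝ)) : ℂ) • σS}

noncomputable def tauGen {V B X ι : Type*} [Fintype V] [Fintype B] [Fintype ι]
    [DecidableEq V] [DecidableEq B]
    (ω : X → Matrix V V ℂ) (σ : ι → X → Matrix B B ℂ) : ℝ :=
  sInf {r : ℝ | 0 ≤ r ∧ ∃ (m : ℕ) (ρs : Matrix (Fin m × B) (Fin m × B) ℂ)
      (N : ι → Matrix (V × Fin m) (V × Fin m) ℂ) (Ms : ι → Matrix (V × B) (V × B) ℂ),
      IsState ρs ∧ (∀ a, (N a).PosSemidef) ∧ ((∑ a, N a) = 1) ∧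
      (∀ a, (Ms a).PosSemidef ∧ Separable (Ms a)) ∧
      (∀ a x, (((1 + r : ℝ) : ℂ))⁻¹ • (σ a x + ((r : ℝ) : ℂ) • teleA (N a) ρs (ω x)) =
        ptrace₁ (Ms a * (ω x ⊗ₖ (1 : Matrix B B ℂ)))) ∧
      (∀ x, (∑ a, Ms a) = (1 : Matrix V V ℂ) ⊗ₖ
        ((((1 + r : ℝ) : ℂ))⁻¹ •
          ((∑ a, σ a x) + ((r : ℝ) : ℂ) • ∑ a, teleA (N a) ρs (ω x))))}

noncomputable def tauCl {V B X ι : Type*} [Fintype V] [Fintype B] [Fintype ι]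
    [DecidableEq V] [DecidableEq B]
    (ω : X → Matrix V V ℂ) (σ : ι → X → Matrix B B ℂ) : ℝ :=
  sInf {r : ℝ | 0 ≤ r ∧ ∃ (Mb Ms : ι → Matrix (V × B) (V × B) ℂ),
    (∀ a, (Mb a).PosSemidef ∧ Separable (Mb a)) ∧
    (∀ a, (Ms a).PosSemidef ∧ Separable (Ms a)) ∧
    (∀ x, (∑ a, Mb a) = (1 : Matrix V V ℂ) ⊗ₖ
      (∑ a, ptrace₁ (Mb a * (ω x ⊗ₖ (1 : Matrix B B ℂ))))) ∧
    (∀ a x, (((1 + r : ℝ) : ℂ))⁻¹ •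
        (σ a x + ((r : ℝ) : ℂ) • ptrace₁ (Mb a * (ω x ⊗ₖ (1 : Matrix B B ℂ)))) =
      ptrace₁ (Ms a * (ω x ⊗ₖ (1 : Matrix B B ℂ)))) ∧
    (∀ x, (∑ a, Ms a) = (1 : Matrix V V ℂ) ⊗ₖ
      ((((1 + r : ℝ) : ℂ))⁻¹ •
        ((∑ a, σ a x) + ((r : ℝ) : ℂ) •
          ∑ a, ptrace₁ (Mb a * (ω x ⊗ₖ (1 : Matrix B B ℂ))))))}

noncomputable def tauR {V B X ι : Type*} [Fintype V] [Fintype B] [Fintype ι]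
    [DecidableEq V] [DecidableEq B]
    (ω : X → Matrix V V ℂ) (σ : ι → X → Matrix B B ℂ) : ℝ :=
  sInf {r : ℝ | 0 ≤ r ∧ ∃ (p : ι → ℝ) (Ms : ι → Matrix (V × B) (V × B) ℂ),
    (∀ a, 0 ≤ p a) ∧ ((∑ a, p a) = 1) ∧
    (∀ a, (Ms a).PosSemidef ∧ Separable (Ms a)) ∧
    (∀ a x, (((1 + r : ℝ) : ℂ))⁻¹ •
        (σ a x + ((r * p a : ℝ) : ℂ) • ((Fintype.card B : ℂ)⁻¹ • (1 : Matrix B B ℂ))) =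
      ptrace₁ (Ms a * (ω x ⊗ₖ (1 : Matrix B B ℂ)))) ∧
    (∀ x, (∑ a, Ms a) = (1 : Matrix V V ℂ) ⊗ₖ
      ((((1 + r : ℝ) : ℂ))⁻¹ •
        ((∑ a, σ a x) + ((r : ℝ) : ℂ) • ((Fintype.card B : ℂ)⁻¹ • (1 : Matrix B B ℂ)))))}

noncomputable def TW {V B X ι : Type*} [Fintype V] [Fintype B] [Fintype ι]
    [DecidableEq B]
    (ω : X → Matrix V V ℂ) (σ : ι → X → Matrix B B ℂ) : ℝ :=
  sInf {p : ℝ | 0 ≤ p ∧ p ≤ 1 ∧ ∃ (Mt Mb : ι → Matrix (V × B) (V × B) ℂ),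
    (∀ a, (Mb a).PosSemidef ∧ Separable (Mb a)) ∧
    (∀ a, (ptranspose₁ (Mt a)).PosSemidef) ∧
    (∀ x x', (∑ a, ptrace₁ (Mt a * (ω x ⊗ₖ (1 : Matrix B B ℂ)))) =
      ∑ a, ptrace₁ (Mt a * (ω x' ⊗ₖ (1 : Matrix B B ℂ)))) ∧
    (∀ a x, σ a x = ptrace₁
      ((((p : ℝ) : ℂ) • Mt a + (((1 - p : ℝ)) : ℂ) • Mb a) * (ω x ⊗ₖ (1 : Matrix B B ℂ))))}

/-!
Tomographic completeness turns every equation between assemblages into one between the effective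
operators `tr_A[(M_a ⊗ 1)(1 ⊗ ρ)]` on `V ⊗ B`. Since separability is a cone condition, `r` is thus
feasible for `τ_r` iff some distribution `p` makes every `tr_A[(M_a ⊗ 1)(1 ⊗ ρ)] + (r p_a / d_B) 1`
separable.

For the partial Bell measurement the first effective operator is `ρ^Γ / d`, with `Γ` the partial
transpose on `A`, and the condition on it reads `ρ + (d r p_0 / d_B) 1` separable. The second one is
separable without any noise, because `1 - Φ+` is a separable measurement operator: `d (1 - Φ+)` is a
sum of product projections and, for each pair `i ≠ j`, of a two-qubit operator on the span of `e_i`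
and `e_j` that is a combination of Pauli products. So all the noise should go to the first outcome,
`p = (1, 0)`, and `r` is feasible iff `ρ + (r d² / (d d_B)) 1` is separable, that is, iff `r d²` is
feasible for `ε_r(ρ)`.
-/

open scoped Pointwise in
lemma sInf_setOf_mul_mem {c : ℝ} (hc : 0 < c) (S : Set ℝ) :
    sInf {r | r * c ∈ S} = sInf S / c := by
  have preimage_eq_smul : {r | r * c ∈ S} = c⁻¹ • S := by
    ext r
    rw [Set.mem_inv_smul_set_iff₀ hc.ne', smul_eq_mul, mul_comm, Set.mem_ofPred_eq]
  rw [preimage_eq_smul, Real.sInf_smul_of_nonneg (inv_nonneg.2 hc.le), smul_eq_mul,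
    inv_mul_eq_div]

section SeparableCone

variable {V B : Type*} [Fintype V] [Fintype B]

lemma separable_kronecker {τ : Matrix V V ℂ} {χ : Matrix B B ℂ} (hτ : τ.PosSemidef)
    (hχ : χ.PosSemidef) : Separable (τ ⊗ₖ χ) :=
  ⟨1, fun _ ↦ τ, fun _ ↦ χ, fun _ ↦ hτ, fun _ ↦ hχ, by simp⟩

lemma separable_zero : Separable (0 : Matrix (V × B) (V × B) ℂ) :=
  ⟨0, Fin.elim0, Fin.elim0, Fin.rec0, Fin.rec0, by simp⟩

lemma separable_one [DecidableEq V] [DecidableEq B] :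
    Separable (1 : Matrix (V × B) (V × B) ℂ) := by
  rw [← one_kronecker_one]
  exact separable_kronecker .one .one

lemma Separable.add {M N : Matrix (V × B) (V × B) ℂ} (hM : Separable M) (hN : Separable N) :
    Separable (M + N) := by
  obtain ⟨m, τ, χ, hτ, hχ, rfl⟩ := hM
  obtain ⟨n, τ', χ', hτ', hχ', rfl⟩ := hN
  refine ⟨m + n, Fin.append τ τ', Fin.append χ χ', fun i ↦ ?_, fun i ↦ ?_,
    by simp [Fin.sum_univ_add]⟩
  · induction i using Fin.addCases with
    | left i => simpa using hτ i
    | right i => simpa using hτ' i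
  · induction i using Fin.addCases with
    | left i => simpa using hχ i
    | right i => simpa using hχ' i

lemma separable_sum {ι : Type*} {s : Finset ι} {M : ι → Matrix (V × B) (V × B) ℂ}
    (h : ∀ i ∈ s, Separable (M i)) : Separable (∑ i ∈ s, M i) :=
  Finset.sum_induction M Separable (fun _ _ ↦ Separable.add) separable_zero h

lemma Separable.smul {M : Matrix (V × B) (V × B) ℂ} (hM : Separable M) {c : ℝ} (hc : 0 ≤ c) :
    Separable ((c : ℂ) • M) := by
  obtain ⟨n, τ, χ, hτ, hχ, rfl⟩ := hM
  refine ⟨n, fun i ↦ (c : ℂ) • τ i, χ, fun i ↦ (hτ i).smul (by exact_mod_cast hc), hχ, ?_⟩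
  simp only [Finset.smul_sum, smul_kronecker]

lemma separable_smul_iff {M : Matrix (V × B) (V × B) ℂ} {c : ℝ} (hc : 0 < c) :
    Separable ((c : ℂ) • M) ↔ Separable M := by
  refine ⟨fun h ↦ ?_, fun h ↦ h.smul hc.le⟩
  have hc' : (c : ℂ) ≠ 0 := by exact_mod_cast hc.ne'
  simpa only [Complex.ofReal_inv, inv_smul_smul₀ hc'] using h.smul (inv_nonneg.2 hc.le)

lemma Separable.posSemidef {M : Matrix (V × B) (V × B) ℂ} (hM : Separable M) :
    M.PosSemidef := by
  obtain ⟨n, τ, χ, hτ, hχ, rfl⟩ := hM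
  exact posSemidef_sum _ fun i _ ↦ (hτ i).kronecker (hχ i)

lemma Separable.add_smul_one [DecidableEq V] [DecidableEq B] {M : Matrix (V × B) (V × B) ℂ}
    (hM : Separable M) {c : ℝ} (hc : 0 ≤ c) : Separable (M + (c : ℂ) • 1) :=
  hM.add (separable_one.smul hc)

lemma Separable.add_smul_one_mono [DecidableEq V] [DecidableEq B]
    {M : Matrix (V × B) (V × B) ℂ} {s t : ℝ} (h : Separable (M + (s : ℂ) • 1)) (hst : s ≤ t) :
    Separable (M + (t : ℂ) • 1) := by
  have key := h.add_smul_one (sub_nonneg.2 hst)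
  rwa [add_assoc, ← add_smul, ← Complex.ofReal_add, add_sub_cancel] at key

lemma separable_kronecker_sub_kronecker {A C : Matrix V V ℂ} {D E : Matrix B B ℂ}
    (h₁ : (A + C).PosSemidef) (h₂ : (A - C).PosSemidef)
    (h₃ : (D + E).PosSemidef) (h₄ : (D - E).PosSemidef) :
    Separable (A ⊗ₖ D - C ⊗ₖ E) := by
  have polarization : A ⊗ₖ D - C ⊗ₖ E =
      ((1 / 2 : ℝ) : ℂ) • ((A + C) ⊗ₖ (D - E) + (A - C) ⊗ₖ (D + E)) := by
    ext p q
    simp only [Matrix.sub_apply, Matrix.add_apply, Matrix.smul_apply, kroneckerMap_apply,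
      smul_eq_mul]
    push_cast
    ring
  rw [polarization]
  exact ((separable_kronecker h₁ h₄).add (separable_kronecker h₂ h₃)).smul (by norm_num)

end SeparableCone

section PartialTranspose

variable {V B : Type*}

lemma ptranspose₁_ptranspose₁ (M : Matrix (V × B) (V × B) ℂ) :
    ptranspose₁ (ptranspose₁ M) = M := rfl

lemma ptranspose₁_add_smul_one [DecidableEq V] [DecidableEq B] (M : Matrix (V × B) (V × B) ℂ)
    (c : ℂ) : ptranspose₁ (M + c • 1) = ptranspose₁ M + c • 1 := by
  ext ⟨v, b⟩ ⟨v', b'⟩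
  simp [ptranspose₁, one_apply, eq_comm]

variable [Fintype V] [Fintype B]

lemma Separable.ptranspose₁ {M : Matrix (V × B) (V × B) ℂ} (hM : Separable M) :
    Separable (ptranspose₁ M) := by
  obtain ⟨n, τ, χ, hτ, hχ, rfl⟩ := hM
  refine ⟨n, fun i ↦ (τ i)ᵀ, χ, fun i ↦ (hτ i).transpose, hχ, ?_⟩
  ext p q
  simp [Tele.ptranspose₁, Matrix.sum_apply]

lemma separable_ptranspose₁_iff {M : Matrix (V × B) (V × B) ℂ} :
    Separable (ptranspose₁ M) ↔ Separable M :=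
  ⟨fun h ↦ ptranspose₁_ptranspose₁ M ▸ h.ptranspose₁, Separable.ptranspose₁⟩

end PartialTranspose

section MaximallyEntangled

variable {V : Type*} [DecidableEq V]

lemma posSemidef_single_add_single [Finite V] (i j : V) {c : ℂ} (hc : c * star c = 1) :
    (single i i (1 : ℂ) + single j j (1 : ℂ) +
      (star c • single i j (1 : ℂ) + c • single j i (1 : ℂ))).PosSemidef := by
  convert posSemidef_vecMulVec_self_star (Pi.single i 1 + c • Pi.single j 1 : V → ℂ) using 1
  simp only [single_eq_single_vecMulVec_single, star_add, star_smul, Pi.star_single, star_one,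
    add_vecMulVec, vecMulVec_add, smul_vecMulVec, vecMulVec_smul]
  linear_combination (norm := module) -hc • vecMulVec (Pi.single j 1) (Pi.single j (1 : ℂ))

lemma posSemidef_single_self [Finite V] (i : V) : (single i i (1 : ℂ)).PosSemidef := by
  simpa [single_eq_single_vecMulVec_single] using
    posSemidef_vecMulVec_self_star (Pi.single i 1 : V → ℂ)

variable [Fintype V]

-- On the span of `e_i` and `e_j` this is `1 ⊗ 1 - (X ⊗ X - Y ⊗ Y) / 2` in terms of Pauli matrices.
lemma separable_single_pair (i j : V) :
    Separable ((single i i (1 : ℂ) + single j j 1) ⊗ₖ (single i i (1 : ℂ) + single j j 1) -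
      (single i j (1 : ℂ) ⊗ₖ single i j (1 : ℂ) + single j i (1 : ℂ) ⊗ₖ single j i (1 : ℂ))) := by
  let P := single i i (1 : ℂ) + single j j 1
  let X (c : ℂ) := star c • single i j (1 : ℂ) + c • single j i 1
  have add_psd {c : ℂ} (hc : c * star c = 1) : (P + X c).PosSemidef :=
    posSemidef_single_add_single i j hc
  have sub_psd {c : ℂ} (hc : c * star c = 1) : (P - X c).PosSemidef := by
    convert add_psd (c := -c) (by simpa using hc) using 1
    simp only [X, star_neg]
    module
  have key {c e : ℂ} (hc : c * star c = 1) (he : e * star e = 1) :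
      Separable (P ⊗ₖ P - X c ⊗ₖ X e) :=
    separable_kronecker_sub_kronecker (add_psd hc) (sub_psd hc) (add_psd he) (sub_psd he)
  convert ((key (c := 1) (e := 1) (by simp) (by simp)).add
    (key (c := Complex.I) (e := -Complex.I) (by simp) (by simp))).smul
    (c := 1 / 2) (by norm_num) using 1
  simp only [P, X, add_kronecker, kronecker_add, smul_kronecker, kronecker_smul, smul_add,
    smul_smul, Complex.star_def, map_one, map_neg, Complex.conj_I, neg_mul, mul_neg,
    Complex.I_mul_I]
  push_cast
  module

lemma card_smul_one_sub_sum_single :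
    (Fintype.card V : ℂ) • (1 : Matrix (V × V) (V × V) ℂ) -
        ∑ i : V, ∑ j : V, single i j (1 : ℂ) ⊗ₖ single i j (1 : ℂ) =
      ∑ i : V, ∑ j ∈ Finset.univ.erase i,
        (((1 / 2 : ℝ) : ℂ) •
          ((single i i (1 : ℂ) + single j j 1) ⊗ₖ (single i i (1 : ℂ) + single j j 1) -
            (single i j (1 : ℂ) ⊗ₖ single i j (1 : ℂ) +
              single j i (1 : ℂ) ⊗ₖ single j i (1 : ℂ))) +
        ((Fintype.card V - 1 : ℝ) : ℂ) • single i i (1 : ℂ) ⊗ₖ single j j (1 : ℂ)) := by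
  have one_eq_sum : (1 : Matrix (V × V) (V × V) ℂ) =
      ∑ i : V, ∑ j : V, single i i (1 : ℂ) ⊗ₖ single j j (1 : ℂ) := by
    simp only [single_kronecker_single, mul_one]
    rw [← Fintype.sum_prod_type', sum_single_one]
  simp only [one_eq_sum, Finset.sum_erase_eq_sub (Finset.mem_univ _), add_kronecker, kronecker_add,
    Finset.sum_sub_distrib, Finset.sum_add_distrib, smul_add, smul_sub, ← Finset.smul_sum,
    Finset.sum_const, Finset.card_univ]
  rw [Finset.sum_comm (f := fun i j : V ↦ single j j (1 : ℂ) ⊗ₖ single i i (1 : ℂ)),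
    Finset.sum_comm (f := fun i j : V ↦ single j i (1 : ℂ) ⊗ₖ single j i (1 : ℂ))]
  simp only [← Nat.cast_smul_eq_nsmul ℂ]
  push_cast
  module

lemma separable_card_smul_one_sub_sum_single :
    Separable ((Fintype.card V : ℂ) • (1 : Matrix (V × V) (V × V) ℂ) -
      ∑ i : V, ∑ j : V, single i j (1 : ℂ) ⊗ₖ single i j (1 : ℂ)) := by
  rw [card_smul_one_sub_sum_single]
  refine separable_sum fun i _ ↦ separable_sum fun j _ ↦ .add ?_ ?_
  · exact (separable_single_pair i j).smul (by norm_num)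
  · have card_pos : 1 ≤ Fintype.card V := Fintype.card_pos_iff.2 ⟨i⟩
    exact (separable_kronecker (posSemidef_single_self i) (posSemidef_single_self j)).smul
      (sub_nonneg.2 (by exact_mod_cast card_pos))

lemma maxEnt_eq_smul_sum_single (d : ℕ) :
    maxEnt d = (d : ℂ)⁻¹ • ∑ i : Fin d, ∑ j : Fin d, single i j (1 : ℂ) ⊗ₖ single i j (1 : ℂ) := by
  ext p q
  simp [maxEnt, Matrix.sum_apply, single_apply, ite_and, eq_comm]

lemma separable_one_sub_maxEnt {d : ℕ} (hd : d ≠ 0) : Separable (1 - maxEnt d) := by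
  have hd' : (d : ℂ) ≠ 0 := by exact_mod_cast hd
  convert (separable_card_smul_one_sub_sum_single (V := Fin d)).smul (c := (d : ℝ)⁻¹)
    (by positivity) using 1
  rw [maxEnt_eq_smul_sum_single, Fintype.card_fin, smul_sub, smul_smul]
  simp [hd']

end MaximallyEntangled

section EffectiveOperator

variable {V A B : Type*}

lemma posSemidef_ptrace₁ [Fintype V] {M : Matrix (V × B) (V × B) ℂ} (hM : M.PosSemidef) :
    (ptrace₁ M).PosSemidef := by
  have ptrace₁_eq_sum : ptrace₁ M = ∑ v, M.submatrix (Prod.mk v) (Prod.mk v) := by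
    ext b b'
    simp [ptrace₁, Matrix.sum_apply]
  rw [ptrace₁_eq_sum]
  exact posSemidef_sum _ fun v _ ↦ hM.submatrix _

variable [Fintype A] [Fintype B] [DecidableEq B]

lemma ptrace₁_kronecker_one_mul_comm (C : Matrix A A ℂ) (M : Matrix (A × B) (A × B) ℂ) :
    ptrace₁ ((C ⊗ₖ (1 : Matrix B B ℂ)) * M) = ptrace₁ (M * (C ⊗ₖ (1 : Matrix B B ℂ))) := by
  ext b b'
  simp only [ptrace₁, of_apply, mul_apply, kroneckerMap_apply, one_apply, Fintype.sum_prod_type,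
    mul_ite, ite_mul, mul_one, mul_zero, zero_mul, Finset.sum_ite_eq, Finset.sum_ite_eq',
    Finset.mem_univ, if_true]
  rw [Finset.sum_comm]
  simp only [mul_comm]

open scoped MatrixOrder Matrix.Norms.L2Operator in
lemma posSemidef_piOp {χ : Matrix A A ℂ} {ρ : Matrix (A × B) (A × B) ℂ} (hχ : χ.PosSemidef)
    (hρ : ρ.PosSemidef) : (piOp χ ρ).PosSemidef := by
  classical
  obtain ⟨C, rfl⟩ := CStarAlgebra.nonneg_iff_eq_star_mul_self.1 hχ.nonneg
  have conj_eq : piOp (star C * C) ρ =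
      ptrace₁ ((C ⊗ₖ (1 : Matrix B B ℂ)) * ρ * (C ⊗ₖ (1 : Matrix B B ℂ))ᴴ) := by
    rw [star_eq_conjTranspose, conjTranspose_kronecker, conjTranspose_one,
      ← ptrace₁_kronecker_one_mul_comm, ← Matrix.mul_assoc, ← mul_kronecker_mul, Matrix.one_mul,
      piOp]
  rw [conj_eq]
  exact posSemidef_ptrace₁ (hρ.mul_mul_conjTranspose_same _)

variable [Fintype V] [DecidableEq V]

lemma chanOp_apply (M : Matrix (V × A) (V × A) ℂ) (ρ : Matrix (A × B) (A × B) ℂ)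
    (p q : V × B) :
    chanOp M ρ p q = ∑ a, ∑ a', M (p.1, a) (q.1, a') * ρ (a', p.2) (a, q.2) := by
  simp [chanOp, ptraceMid, mul_apply, one_apply, Fintype.sum_prod_type]

lemma chanOp_sum {ι : Type*} [Fintype ι] (M : ι → Matrix (V × A) (V × A) ℂ)
    (ρ : Matrix (A × B) (A × B) ℂ) : chanOp (∑ i, M i) ρ = ∑ i, chanOp (M i) ρ := by
  ext p q
  simp only [chanOp_apply, Matrix.sum_apply, Finset.sum_mul]
  simp_rw [Finset.sum_comm (s := Finset.univ (α := A)) (t := Finset.univ (α := ι))]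

lemma chanOp_kronecker (τ : Matrix V V ℂ) (χ : Matrix A A ℂ) (ρ : Matrix (A × B) (A × B) ℂ) :
    chanOp (τ ⊗ₖ χ) ρ = τ ⊗ₖ piOp χ ρ := by
  ext p q
  simp [chanOp_apply, piOp, ptrace₁, mul_apply, one_apply, Fintype.sum_prod_type, Finset.mul_sum,
    mul_assoc]

lemma Separable.chanOp {M : Matrix (V × A) (V × A) ℂ} (hM : Separable M)
    {ρ : Matrix (A × B) (A × B) ℂ} (hρ : ρ.PosSemidef) : Separable (chanOp M ρ) := by
  obtain ⟨n, τ, χ, hτ, hχ, rfl⟩ := hM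
  rw [chanOp_sum]
  refine separable_sum fun i _ ↦ ?_
  rw [chanOp_kronecker]
  exact separable_kronecker (hτ i) (posSemidef_piOp (hχ i) hρ)

lemma chanOp_one [DecidableEq A] (ρ : Matrix (A × B) (A × B) ℂ) :
    chanOp (1 : Matrix (V × A) (V × A) ℂ) ρ = 1 ⊗ₖ ptrace₁ ρ := by
  rw [← one_kronecker_one, chanOp_kronecker, piOp, one_kronecker_one, Matrix.one_mul]

lemma chanOp_maxEnt {d : ℕ} (ρ : Matrix (Fin d × B) (Fin d × B) ℂ) :
    chanOp (maxEnt d) ρ = (d : ℂ)⁻¹ • ptranspose₁ ρ := by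
  ext p q
  simp [chanOp_apply, maxEnt, ptranspose₁, ite_and]

end EffectiveOperator

section TeleportationMap

variable {V A B : Type*} [Fintype V] [Fintype A] [Fintype B] [DecidableEq B]

/-- The map `ω ↦ tr_V[M (ω ⊗ 1)]` from input states to Bob's unnormalised states that an effective
operator `M` on `V ⊗ B` induces, made bilinear in `M` and `ω`. -/
noncomputable def teleMap :
    Matrix (V × B) (V × B) ℂ →ₗ[ℂ] Matrix V V ℂ →ₗ[ℂ] Matrix B B ℂ :=
  LinearMap.mk₂ ℂ (fun M ω ↦ ptrace₁ (M * (ω ⊗ₖ (1 : Matrix B B ℂ))))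
    (fun M N ω ↦ by ext; simp [ptrace₁, Matrix.add_mul, Finset.sum_add_distrib])
    (fun c M ω ↦ by ext; simp [ptrace₁, Finset.mul_sum])
    (fun M ω ω' ↦ by
      ext; simp [ptrace₁, add_kronecker, Matrix.mul_add, Finset.sum_add_distrib])
    (fun c M ω ↦ by ext; simp [ptrace₁, smul_kronecker, Finset.mul_sum])

lemma teleMap_apply (M : Matrix (V × B) (V × B) ℂ) (ω : Matrix V V ℂ) :
    teleMap M ω = ptrace₁ (M * (ω ⊗ₖ (1 : Matrix B B ℂ))) := rfl

lemma teleMap_one_kronecker [DecidableEq V] (Y : Matrix B B ℂ) (ω : Matrix V V ℂ) :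
    teleMap (1 ⊗ₖ Y) ω = ω.trace • Y := by
  ext b b'
  rw [teleMap_apply, ← mul_kronecker_mul]
  simp [ptrace₁, trace, Finset.sum_mul]

lemma teleMap_single [DecidableEq V] (M : Matrix (V × B) (V × B) ℂ) (v v' : V) (b b' : B) :
    teleMap M (single v' v 1) b b' = M (v, b) (v', b') := by
  simp [teleMap_apply, ptrace₁, mul_apply, Fintype.sum_prod_type, single_apply, one_apply, ite_and]

lemma teleMap_injective :
    Function.Injective (teleMap : Matrix (V × B) (V × B) ℂ → Matrix V V ℂ →ₗ[ℂ] Matrix B B ℂ) := by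
  intro M N h
  ext ⟨v, b⟩ ⟨v', b'⟩
  classical
  rw [← teleMap_single M, h, teleMap_single]

lemma teleMap_chanOp [DecidableEq V] (M : Matrix (V × A) (V × A) ℂ) (ρ : Matrix (A × B) (A × B) ℂ)
    (ω : Matrix V V ℂ) : teleMap (chanOp M ρ) ω = teleA M ρ ω := by
  ext b b'
  simp only [teleMap_apply, ptrace₁, of_apply, mul_apply, chanOp_apply, kroneckerMap_apply,
    one_apply, mul_ite, mul_one, mul_zero, Fintype.sum_prod_type, Finset.sum_ite_eq',
    Finset.mem_univ, if_true, teleA, ptraceVA, reindex_apply, submatrix_apply,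
    Equiv.prodAssoc_symm_apply, ite_mul, zero_mul, Finset.sum_ite_eq, Finset.sum_mul]
  refine Finset.sum_congr rfl fun v _ ↦ ?_
  rw [Finset.sum_comm]
  simp only [mul_assoc, mul_comm (ω _ _)]

lemma TomoComplete.span_eq_top {X : Type*} {ω : X → Matrix V V ℂ} (hω : TomoComplete ω) :
    Submodule.span ℂ (Set.range ω) = ⊤ := by
  have hermitian_mem {H : Matrix V V ℂ} (hH : H.IsHermitian) :
      H ∈ Submodule.span ℂ (Set.range ω) :=
    Submodule.span_subset_span ℝ ℂ _ (hω H hH)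
  refine eq_top_iff.2 fun M _ ↦ ?_
  rw [← realPart_add_I_smul_imaginaryPart M]
  exact add_mem (hermitian_mem (realPart M).2)
    (Submodule.smul_mem _ _ (hermitian_mem (imaginaryPart M).2))

lemma TomoComplete.eq_of_teleMap_eq {X : Type*} {ω : X → Matrix V V ℂ} (hω : TomoComplete ω)
    {M N : Matrix (V × B) (V × B) ℂ} (h : ∀ x, teleMap M (ω x) = teleMap N (ω x)) : M = N :=
  teleMap_injective (LinearMap.ext_on_range hω.span_eq_top h)

end TeleportationMap

section Robustness

variable {V A B : Type*} [Fintype V] [Fintype A] [Fintype B]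
  [DecidableEq V] [DecidableEq B]

lemma epsR_eq_sInf [DecidableEq A] (ρ : Matrix (A × B) (A × B) ℂ) :
    epsR ρ = sInf {r : ℝ | 0 ≤ r ∧
      Separable (ρ + ((r / Fintype.card (A × B) : ℝ) : ℂ) • 1)} := by
  rw [epsR]
  congr 1
  ext r
  refine and_congr_right fun hr ↦ ?_
  rw [← Complex.ofReal_inv, separable_smul_iff (by positivity), smul_smul]
  push_cast
  rw [div_eq_mul_inv]

lemma teleMap_noisy (M : Matrix (V × A) (V × A) ℂ) (ρ : Matrix (A × B) (A × B) ℂ)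
    {ω : Matrix V V ℂ} (hω : ω.trace = 1) (r s : ℝ) :
    teleMap ((((1 + r : ℝ) : ℂ))⁻¹ • (chanOp M ρ + ((s / Fintype.card B : ℝ) : ℂ) • 1)) ω =
      (((1 + r : ℝ) : ℂ))⁻¹ •
        (teleA M ρ ω + (s : ℂ) • ((Fintype.card B : ℂ)⁻¹ • (1 : Matrix B B ℂ))) := by
  have teleMap_one : teleMap (1 : Matrix (V × B) (V × B) ℂ) ω = 1 := by
    rw [← one_kronecker_one, teleMap_one_kronecker, hω, one_smul]
  simp only [map_smul, map_add, LinearMap.smul_apply, LinearMap.add_apply, teleMap_chanOp,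
    teleMap_one, smul_smul]
  push_cast
  rw [div_eq_mul_inv]

lemma sum_teleA_eq_ptrace₁ [DecidableEq A] {ι : Type*} [Fintype ι]
    {P : ι → Matrix (V × A) (V × A) ℂ} (hP : ∑ a, P a = 1) (ρ : Matrix (A × B) (A × B) ℂ)
    {ω : Matrix V V ℂ} (hω : ω.trace = 1) : ∑ a, teleA (P a) ρ ω = ptrace₁ ρ := by
  simp only [← teleMap_chanOp]
  rw [← LinearMap.sum_apply, ← map_sum, ← chanOp_sum, hP, chanOp_one, teleMap_one_kronecker, hω,
    one_smul]

lemma sum_chanOp_noisy [DecidableEq A] {ι : Type*} [Fintype ι]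
    {P : ι → Matrix (V × A) (V × A) ℂ} (hP : ∑ a, P a = 1) (ρ : Matrix (A × B) (A × B) ℂ)
    {p : ι → ℝ} (hp : ∑ a, p a = 1) (r : ℝ) :
    ∑ a, (chanOp (P a) ρ + ((r * p a / Fintype.card B : ℝ) : ℂ) • 1) =
      1 ⊗ₖ (ptrace₁ ρ + (r : ℂ) • ((Fintype.card B : ℂ)⁻¹ • (1 : Matrix B B ℂ))) := by
  rw [Finset.sum_add_distrib, ← chanOp_sum, hP, chanOp_one, ← Finset.sum_smul,
    ← Complex.ofReal_sum, ← Finset.sum_div, ← Finset.mul_sum, hp, kronecker_add, smul_smul,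
    kronecker_smul, one_kronecker_one]
  push_cast
  rw [mul_one, div_eq_mul_inv]

theorem tauR_teleA_eq_sInf [DecidableEq A] {ι X : Type*} [Fintype ι]
    {P : ι → Matrix (V × A) (V × A) ℂ} (hP : ∑ a, P a = 1) (ρ : Matrix (A × B) (A × B) ℂ)
    {ω : X → Matrix V V ℂ} (hω : ∀ x, (ω x).trace = 1) (htomo : TomoComplete ω) :
    tauR ω (fun a x ↦ teleA (P a) ρ (ω x)) =
      sInf {r : ℝ | 0 ≤ r ∧ ∃ p : ι → ℝ, (∀ a, 0 ≤ p a) ∧ ∑ a, p a = 1 ∧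
        ∀ a, Separable (chanOp (P a) ρ + ((r * p a / Fintype.card B : ℝ) : ℂ) • 1)} := by
  rw [tauR]
  congr 1
  ext r
  refine and_congr_right fun hr ↦ exists_congr fun p ↦ ?_
  have inv_pos : 0 < (1 + r)⁻¹ := by positivity
  let N (a : ι) := ((1 + r : ℝ) : ℂ)⁻¹ •
    (chanOp (P a) ρ + ((r * p a / Fintype.card B : ℝ) : ℂ) • 1)
  have separable_N_iff (a : ι) : Separable (N a) ↔
      Separable (chanOp (P a) ρ + ((r * p a / Fintype.card B : ℝ) : ℂ) • 1) := by
    simp only [N, ← Complex.ofReal_inv, separable_smul_iff inv_pos]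
  constructor
  · rintro ⟨Ms, hp, hp_sum, hMs, hσ, -⟩
    refine ⟨hp, hp_sum, fun a ↦ (separable_N_iff a).1 ?_⟩
    have Ms_eq : Ms a = N a := htomo.eq_of_teleMap_eq fun x ↦ by
      rw [teleMap_noisy _ _ (hω x), hσ, teleMap_apply]
    exact Ms_eq ▸ (hMs a).2
  · rintro ⟨hp, hp_sum, h⟩
    have N_sep (a : ι) : Separable (N a) := (separable_N_iff a).2 (h a)
    refine ⟨N, hp, hp_sum, fun a ↦ ⟨(N_sep a).posSemidef, N_sep a⟩, fun a x ↦ ?_, fun x ↦ ?_⟩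
    · rw [← teleMap_apply, teleMap_noisy _ _ (hω x)]
    · rw [← Finset.smul_sum, sum_chanOp_noisy hP ρ hp_sum, sum_teleA_eq_ptrace₁ hP ρ (hω x),
        kronecker_smul]

end Robustness

section PartialBell

variable {B : Type*} [Fintype B] [DecidableEq B] {d : ℕ}

lemma separable_chanOp_maxEnt_add_iff (hd : d ≠ 0) {ρ : Matrix (Fin d × B) (Fin d × B) ℂ}
    {c : ℝ} : Separable (chanOp (maxEnt d) ρ + (c : ℂ) • 1) ↔
      Separable (ρ + ((d * c : ℝ) : ℂ) • 1) := by
  have hd' : (d : ℂ) ≠ 0 := by exact_mod_cast hd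
  have effective_eq : chanOp (maxEnt d) ρ + (c : ℂ) • 1 =
      (((d : ℝ)⁻¹ : ℝ) : ℂ) • ptranspose₁ (ρ + ((d * c : ℝ) : ℂ) • 1) := by
    rw [chanOp_maxEnt, ptranspose₁_add_smul_one, smul_add, smul_smul]
    push_cast
    rw [inv_mul_cancel_left₀ hd']
  rw [effective_eq, separable_smul_iff (by positivity), separable_ptranspose₁_iff]

lemma exists_separable_chanOp_partialBell_iff (hd : d ≠ 0)
    {ρ : Matrix (Fin d × B) (Fin d × B) ℂ} (hρ : ρ.PosSemidef)
    {P : Fin 2 → Matrix (Fin d × Fin d) (Fin d × Fin d) ℂ} (hP0 : P 0 = maxEnt d)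
    (hP1 : P 1 = 1 - maxEnt d) {r : ℝ} (hr : 0 ≤ r) :
    (∃ p : Fin 2 → ℝ, (∀ a, 0 ≤ p a) ∧ ∑ a, p a = 1 ∧
        ∀ a, Separable (chanOp (P a) ρ + ((r * p a / Fintype.card B : ℝ) : ℂ) • 1)) ↔
      Separable (ρ + ((r * d ^ 2 / Fintype.card (Fin d × B) : ℝ) : ℂ) • 1) := by
  have hd' : (d : ℝ) ≠ 0 := by exact_mod_cast hd
  have noise_eq : r * d ^ 2 / Fintype.card (Fin d × B) = d * (r / Fintype.card B) := by
    rw [Fintype.card_prod, Fintype.card_fin, Nat.cast_mul]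
    field_simp
  rw [noise_eq, ← separable_chanOp_maxEnt_add_iff hd, ← hP0]
  constructor
  · rintro ⟨p, hp, hp_sum, h⟩
    have p_le_one : p 0 ≤ 1 := by
      rw [← hp_sum]
      exact Finset.single_le_sum (fun a _ ↦ hp a) (Finset.mem_univ 0)
    refine (h 0).add_smul_one_mono ?_
    gcongr
    exact mul_le_of_le_one_right hr p_le_one
  · intro h
    have second_outcome : Separable (chanOp (P 1) ρ) :=
      hP1 ▸ (separable_one_sub_maxEnt hd).chanOp hρ
    refine ⟨![1, 0], by simp [Fin.forall_fin_two], by simp, Fin.forall_fin_two.2 ⟨?_, ?_⟩⟩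
    · simpa using h
    · simpa using second_outcome

end PartialBell

/-- for the partial Bell state measurement {Φ+, 1 − Φ+} and tomographically
complete inputs, τ_r({σ_{a|ω_x}}) = ε_r(ρ^{AB})/d². -/
theorem tauR_partial_bell {B X : Type*} [Fintype B] [DecidableEq B]
    (d : ℕ) (hd : 1 ≤ d)
    (ρ : Matrix (Fin d × B) (Fin d × B) ℂ) (hρ : IsState ρ)
    (ω : X → Matrix (Fin d) (Fin d) ℂ) (hω : ∀ x, IsState (ω x))
    (htomo : TomoComplete ω)
    (P : Fin 2 → Matrix (Fin d × Fin d) (Fin d × Fin d) ℂ)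
    (hP0 : P 0 = maxEnt d) (hP1 : P 1 = 1 - maxEnt d) :
    tauR ω (fun (a : Fin 2) x => teleA (P a) ρ (ω x)) = epsR ρ / (d : ℝ) ^ 2 := by
  have d_ne_zero : d ≠ 0 := Nat.one_le_iff_ne_zero.1 hd
  have sq_pos : 0 < (d : ℝ) ^ 2 := by positivity
  have hP : ∑ a, P a = 1 := by rw [Fin.sum_univ_two, hP0, hP1, add_sub_cancel]
  rw [tauR_teleA_eq_sInf hP ρ (fun x ↦ (hω x).2) htomo, epsR_eq_sInf, ← sInf_setOf_mul_mem sq_pos]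
  congr 1
  ext r
  have nonneg_iff : 0 ≤ r * (d : ℝ) ^ 2 ↔ 0 ≤ r := mul_nonneg_iff_of_pos_right sq_pos
  exact (and_congr_right fun hr ↦ exists_separable_chanOp_partialBell_iff d_ne_zero hρ.1 hP0 hP1
    hr).trans (and_congr_left' nonneg_iff.symm)

end Tele
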